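/- arXiv:2402.03682 — 2 statements merged into one kernel-verified Lean document; each statement's English description precedes it below -/
import Mathlib

section
/- Effective support of mode-dependent deformation terms (scalar model of the paper's Proposition asserting that the derivative of the universal Dirac operator at a mode-dependent deformation has effective support at scale 1/M). Let m, n be nonnegative integers with w = m + n in {1, 2}, set sigma = w - 3/2, and let nu be in [0, 1/2), M >= 1, C_1 >= 1. There is a constant C, depending only on m, n, nu, C_1, R_0 and r_0, such that the following holds. Let c : Z -> C be a finitely supported sequence satisfying ||c||_{m' + 1/2} <= C_1 * M^{m'} * ||c||_{1/2} for every nonnegative integer m', let C_0 >= 0, and let G : N -> C be measurable with |G(t,z)| <= C_0 * |z|^sigma almost everywhere. Then the mode-dependent multiplier u of order (m,n) built from c satisfies Int_N |u(t,z)|^2 * |G(t,z)|^2 * |z|^(-2*nu) dt dA(z) <= C * C_0^2 * M^{2*nu} * ||c||_{1/2}^2. -/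
open MeasureTheory Complex
open scoped ENNReal

noncomputable section

instance : Fact (0 < 2 * Real.pi) := ⟨by positivity⟩

/-- The circle `ℝ / 2πℤ`. -/
abbrev Circ := AddCircle (2 * Real.pi)

/-- The punctured disk `D* = {z : 0 < |z| ≤ r₀}`, modeled inside `ℂ ≃ ℝ²`. -/
def punctDisk (r₀ : ℝ) : Set ℂ := {z : ℂ | 0 < ‖z‖ ∧ ‖z‖ ≤ r₀}

/-- The product measure on `N = T × D*`. -/
def μN (r₀ : ℝ) : Measure (Circ × ℂ) :=
  (volume : Measure Circ).prod (volume.restrict (punctDisk r₀))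

/-- The mode-dependent multiplier of order `(m, n)` built from the finitely supported
sequence `c`, with cutoff profile `χ`:
`u(t,z) = ∑_p c_p (i p)^n |p|^m χ(|p| |z|) e^{i p t}`. -/
def modeMult (χ : ℝ → ℝ) (c : ℤ →₀ ℂ) (m n : ℕ) (q : Circ × ℂ) : ℂ :=
  ∑ p ∈ c.support,
    c p * (Complex.I * (p : ℂ)) ^ n * ((|p| : ℤ) : ℂ) ^ m *
      ((χ (((|p| : ℤ) : ℝ) * ‖q.2‖) : ℝ) : ℂ) * fourier p q.1

/-- The squared Sobolev norm `‖c‖_s² = ∑_p (1 + p²)^s |c_p|²`. -/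
def sobNormSq (c : ℤ →₀ ℂ) (s : ℝ) : ℝ :=
  ∑ p ∈ c.support, (1 + (p : ℝ) ^ 2) ^ s * ‖c p‖ ^ 2

/-- The Sobolev norm `‖c‖_s`. -/
def sobNorm (c : ℤ →₀ ℂ) (s : ℝ) : ℝ := Real.sqrt (sobNormSq c s)

lemma aux_ball (k ρ : ℝ) (hk : -2 < k) (hρ : 0 < ρ) :
    ∫⁻ z : ℂ in {z : ℂ | ‖z‖ < ρ}, ENNReal.ofReal (‖z‖ ^ k) ≤
      ENNReal.ofReal (2 * Real.pi * (ρ ^ (k + 2) / (k + 2))) := by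
  have hms : MeasurableSet {z : ℂ | ‖z‖ < ρ} := measurableSet_lt measurable_norm measurable_const
  set g : ℝ → ℝ≥0∞ := fun r => ENNReal.ofReal r * (Set.Iio ρ).indicator (fun r => ENNReal.ofReal (r ^ k)) r with hg
  have hgm : Measurable g := by
    apply Measurable.mul (by fun_prop)
    exact Measurable.indicator (by fun_prop) measurableSet_Iio
  rw [← lintegral_indicator hms, ← Complex.lintegral_comp_polarCoord_symm]
  have h1 : ∫⁻ p in polarCoord.target, ENNReal.ofReal p.1 •
      ({z : ℂ | ‖z‖ < ρ}).indicator (fun z => ENNReal.ofReal (‖z‖ ^ k)) (Complex.polarCoord.symm p)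
      = ∫⁻ p in (Set.Ioi (0 : ℝ)) ×ˢ (Set.Ioo (-Real.pi) Real.pi), g p.1 := by
    rw [polarCoord_target]
    apply setLIntegral_congr_fun (measurableSet_Ioi.prod measurableSet_Ioo)
    rintro ⟨r, θ⟩ ⟨hr, -⟩
    have hr' : 0 < r := hr
    simp only [hg, smul_eq_mul]
    congr 1
    simp only [Set.indicator_apply, Set.mem_ofPred_eq, Complex.norm_polarCoord_symm, abs_of_pos hr', Set.mem_Iio]
  rw [h1, Measure.volume_eq_prod, ← Measure.prod_restrict, lintegral_prod _ (by fun_prop)]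
  simp only [lintegral_const, Measure.restrict_apply MeasurableSet.univ, Set.univ_inter, Real.volume_Ioo]
  rw [lintegral_mul_const _ hgm]
  have h2 : ∫⁻ r in Set.Ioi (0 : ℝ), g r ≤ ENNReal.ofReal (ρ ^ (k + 2) / (k + 2)) := by
    have e1 : ∫⁻ r in Set.Ioi (0 : ℝ), g r =
        ∫⁻ r in Set.Ioi (0 : ℝ), (Set.Ioc 0 ρ).indicator g r := by
      apply setLIntegral_congr_fun measurableSet_Ioi
      intro r hr
      have hr' : 0 < r := hr
      by_cases h : r ≤ ρ
      · simp [Set.indicator_apply, hr', h]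
      · simp [Set.indicator_apply, hr', h, hg, le_of_not_ge h]
    have e2 : ∫⁻ r in Set.Ioi (0 : ℝ), (Set.Ioc 0 ρ).indicator g r ≤ ∫⁻ r in Set.Ioc 0 ρ, g r := by
      rw [← lintegral_indicator measurableSet_Ioc]
      exact setLIntegral_le_lintegral _ _
    have e3 : ∫⁻ r in Set.Ioc 0 ρ, g r ≤ ∫⁻ r in Set.Ioc 0 ρ, ENNReal.ofReal (r ^ (k + 1)) := by
      apply setLIntegral_mono' measurableSet_Ioc
      intro r hr
      rw [Real.rpow_add hr.1, Real.rpow_one, mul_comm, ENNReal.ofReal_mul hr.1.le]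
      simp only [hg]
      gcongr
      exact Set.indicator_le_self' (fun _ _ => zero_le) r
    rw [e1]
    refine (e2.trans e3).trans ?_
    have hi : IntervalIntegrable (fun x : ℝ => x ^ (k + 1)) volume 0 ρ :=
      intervalIntegral.intervalIntegrable_rpow' (by linarith)
    rw [intervalIntegrable_iff_integrableOn_Ioc_of_le hρ.le] at hi
    rw [← ofReal_integral_eq_lintegral_ofReal hi, ← intervalIntegral.integral_of_le hρ.le,
      integral_rpow (Or.inl (by linarith))]
    · apply ENNReal.ofReal_le_ofReal
      rw [Real.zero_rpow (by linarith)]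
      have : k + 1 + 1 = k + 2 := by ring
      rw [this, sub_zero]
    · filter_upwards [ae_restrict_mem measurableSet_Ioc] with r hr
      exact Real.rpow_nonneg hr.1.le _
  rw [mul_comm, ENNReal.ofReal_mul (by positivity)]
  have : Real.pi - -Real.pi = 2 * Real.pi := by ring
  rw [this]
  gcongr

lemma aux_parseval (s : Finset ℤ) (a : ℤ → ℂ) :
    ∫⁻ t : Circ, ENNReal.ofReal (‖∑ p ∈ s, a p * fourier p t‖ ^ 2) =
      ENNReal.ofReal (2 * Real.pi * ∑ p ∈ s, ‖a p‖ ^ 2) := by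
  let F : C(Circ, ℂ) := ∑ p ∈ s, a p • fourier p
  have hF : ∀ t, F t = ∑ p ∈ s, a p * fourier p t := by
    intro t; simp [F, ContinuousMap.sum_apply]
  have h1 : ContinuousMap.toLp (E := ℂ) 2 AddCircle.haarAddCircle ℂ F
      = ∑ p ∈ s, a p • fourierLp (T := 2 * Real.pi) 2 p := by
    simp only [F, map_sum, map_smul, fourierLp]
  have h2 := (orthonormal_fourier (T := 2 * Real.pi)).inner_sum a a s
  rw [← h1, ContinuousMap.inner_toLp] at h2
  have h3 : ∫ t, ‖F t‖ ^ 2 ∂(AddCircle.haarAddCircle : Measure Circ) = ∑ p ∈ s, ‖a p‖ ^ 2 := by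
    have : ((∫ t, ‖F t‖ ^ 2 ∂(AddCircle.haarAddCircle : Measure Circ) : ℝ) : ℂ)
        = ((∑ p ∈ s, ‖a p‖ ^ 2 : ℝ) : ℂ) := by
      rw [← integral_complex_ofReal]
      convert h2 using 1
      · congr 1; ext t
        rw [Complex.mul_conj, Complex.normSq_eq_norm_sq]
      · push_cast
        refine Finset.sum_congr rfl fun p _ => ?_
        rw [mul_comm, Complex.mul_conj, Complex.normSq_eq_norm_sq]; push_cast; rfl
    exact_mod_cast this
  have hint : Integrable (fun t => ‖F t‖ ^ 2) (AddCircle.haarAddCircle : Measure Circ) := by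
    apply Continuous.integrable_of_hasCompactSupport (by fun_prop)
    exact HasCompactSupport.of_compactSpace _
  simp_rw [← hF]
  rw [AddCircle.volume_eq_smul_haarAddCircle, lintegral_smul_measure,
    ← ofReal_integral_eq_lintegral_ofReal hint (Filter.Eventually.of_forall fun t => by positivity), h3,
    smul_eq_mul, ← ENNReal.ofReal_mul (by positivity)]

lemma aux_interp (ν C₁ M : ℝ) (hν : ν ∈ Set.Ico (0 : ℝ) (1/2)) (hM : 1 ≤ M)
    (c : ℤ →₀ ℂ) (h : sobNorm c (3/2) ≤ C₁ * M * sobNorm c (1/2)) :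
    sobNormSq c (1/2 + ν) ≤ (1 + C₁ ^ 2) * M ^ (2 * ν) * sobNorm c (1/2) ^ 2 := by
  have hM0 : 0 < M := by linarith
  have hnn : ∀ s, 0 ≤ sobNormSq c s := fun s =>
    Finset.sum_nonneg fun p _ => by positivity
  have hsq : ∀ s, sobNorm c s ^ 2 = sobNormSq c s := fun s => Real.sq_sqrt (hnn s)
  have h' : sobNormSq c (3/2) ≤ C₁ ^ 2 * M ^ 2 * sobNormSq c (1/2) := by
    rw [← hsq, ← hsq]
    have := pow_le_pow_left₀ (Real.sqrt_nonneg _) h 2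
    calc _ ≤ _ := this
      _ = _ := by ring
  have key : sobNormSq c (1/2 + ν) ≤
      M ^ (2 * ν) * (sobNormSq c (1/2) + sobNormSq c (3/2) / M ^ 2) := by
    unfold sobNormSq
    rw [Finset.sum_div, ← Finset.sum_add_distrib, Finset.mul_sum]
    refine Finset.sum_le_sum fun p _ => ?_
    set A : ℝ := 1 + (p : ℝ) ^ 2 with hA
    have hA0 : 0 < A := by positivity
    have e1 : A ^ (1/2 + ν) = A ^ (1/2 : ℝ) * A ^ ν := Real.rpow_add hA0 _ _
    have e2 : A ^ (3/2 : ℝ) = A ^ (1/2 : ℝ) * A := by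
      rw [show (3/2 : ℝ) = 1/2 + 1 by norm_num, Real.rpow_add hA0, Real.rpow_one]
    have e3 : A ^ ν = M ^ (2 * ν) * (A / M ^ 2) ^ ν := by
      rw [Real.div_rpow hA0.le (by positivity), Real.rpow_mul hM0.le, Real.rpow_two]
      field_simp
    have e4 : (A / M ^ 2) ^ ν ≤ 1 + A / M ^ 2 := by
      have hx : 0 < A / M ^ 2 := by positivity
      rcases le_total (A / M ^ 2) 1 with h1 | h1
      · have := Real.rpow_le_one hx.le h1 hν.1
        linarith
      · have := Real.rpow_le_rpow_of_exponent_le h1 (show ν ≤ 1 by linarith [hν.2])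
        rw [Real.rpow_one] at this
        linarith
    rw [e1, e2, e3]
    calc A ^ (1/2 : ℝ) * (M ^ (2 * ν) * (A / M ^ 2) ^ ν) * ‖c p‖ ^ 2
        ≤ A ^ (1/2 : ℝ) * (M ^ (2 * ν) * (1 + A / M ^ 2)) * ‖c p‖ ^ 2 := by gcongr
      _ = _ := by ring
  refine key.trans ?_
  rw [hsq]
  have : sobNormSq c (3/2) / M ^ 2 ≤ C₁ ^ 2 * sobNormSq c (1/2) := by
    rw [div_le_iff₀ (by positivity)]; linarith
  calc _ ≤ M ^ (2 * ν) * (sobNormSq c (1/2) + C₁ ^ 2 * sobNormSq c (1/2)) := by gcongr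
    _ = _ := by ring

/-- The contribution of a single mode, after integrating in `z`. -/
lemma aux_mode (r₀ R₀ : ℝ) (hR₀ : 0 < R₀)
    (χ : ℝ → ℝ) (hχ01 : ∀ s, χ s ∈ Set.Icc (0 : ℝ) 1)
    (hχsupp : ∀ s, 2 * R₀ ≤ s → χ s = 0) (w : ℕ) (hw : 1 ≤ w)
    (ν : ℝ) (hν : ν ∈ Set.Ico (0 : ℝ) (1/2)) (p : ℤ) (B : ℝ) (hB : 0 ≤ B) :
    ∫⁻ z : ℂ in punctDisk r₀, ENNReal.ofReal
        (B * ((|(p : ℝ)| ^ w * χ (|(p : ℝ)| * ‖z‖)) ^ 2 * ‖z‖ ^ (2 * (w : ℝ) - 3 - 2 * ν))) ≤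
      ENNReal.ofReal (B * (2 * Real.pi * ((2 * R₀) ^ (2 * (w : ℝ) - 1 - 2 * ν) /
        (2 * (w : ℝ) - 1 - 2 * ν))) * (1 + (p : ℝ) ^ 2) ^ (1/2 + ν)) := by
  rcases eq_or_ne p 0 with rfl | hp
  · simp [show w ≠ 0 by omega]
  have hw' : (1 : ℝ) ≤ w := by exact_mod_cast hw
  have hP : 0 < |(p : ℝ)| := abs_pos.mpr (by exact_mod_cast hp)
  set P := |(p : ℝ)| with hPdef
  set ρ := 2 * R₀ / P with hρ
  have hρ0 : 0 < ρ := by positivity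
  have hms : MeasurableSet {z : ℂ | ‖z‖ < ρ} := measurableSet_lt measurable_norm measurable_const
  have he : 0 < 2 * (w : ℝ) - 1 - 2 * ν := by linarith [hν.2]
  calc _ ≤ ∫⁻ z : ℂ, ENNReal.ofReal
        (B * ((P ^ w * χ (P * ‖z‖)) ^ 2 * ‖z‖ ^ (2 * (w : ℝ) - 3 - 2 * ν))) :=
        setLIntegral_le_lintegral _ _
    _ ≤ ∫⁻ z : ℂ in {z : ℂ | ‖z‖ < ρ}, ENNReal.ofReal (B * P ^ (2 * w)) *
          ENNReal.ofReal (‖z‖ ^ (2 * (w : ℝ) - 3 - 2 * ν)) := by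
        rw [← lintegral_indicator hms]
        apply lintegral_mono
        intro z
        by_cases hz : ‖z‖ < ρ
        · simp only [Set.indicator_apply, Set.mem_ofPred_eq, hz, if_true]
          rw [← ENNReal.ofReal_mul (by positivity)]
          apply ENNReal.ofReal_le_ofReal
          rw [mul_assoc]
          have h0 := (hχ01 (P * ‖z‖)).1
          have h1 := (hχ01 (P * ‖z‖)).2
          have : (P ^ w * χ (P * ‖z‖)) ^ 2 ≤ P ^ (2 * w) := by
            rw [mul_comm 2 w, pow_mul]
            apply pow_le_pow_left₀ (by positivity)
            exact mul_le_of_le_one_right (by positivity) h1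
          gcongr
        · have : 2 * R₀ ≤ P * ‖z‖ := by
            have h := not_lt.mp hz
            rw [hρ, div_le_iff₀ hP] at h
            linarith
          simp [hχsupp _ this]
    _ = ENNReal.ofReal (B * P ^ (2 * w)) *
        ∫⁻ z : ℂ in {z : ℂ | ‖z‖ < ρ}, ENNReal.ofReal (‖z‖ ^ (2 * (w : ℝ) - 3 - 2 * ν)) := by
        rw [lintegral_const_mul _ (by fun_prop)]
    _ ≤ ENNReal.ofReal (B * P ^ (2 * w)) * ENNReal.ofReal (2 * Real.pi *
          (ρ ^ (2 * (w : ℝ) - 3 - 2 * ν + 2) / (2 * (w : ℝ) - 3 - 2 * ν + 2))) := by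
        gcongr
        exact aux_ball _ ρ (by linarith) hρ0
    _ ≤ _ := by
        rw [← ENNReal.ofReal_mul (by positivity)]
        apply ENNReal.ofReal_le_ofReal
        rw [show 2 * (w : ℝ) - 3 - 2 * ν + 2 = 2 * (w : ℝ) - 1 - 2 * ν by ring]
        set e := 2 * (w : ℝ) - 1 - 2 * ν with hedef
        have h1 : P ^ (2 * w) * ρ ^ e = (2 * R₀) ^ e * P ^ (1 + 2 * ν) := by
          rw [hρ, Real.div_rpow (by positivity) hP.le]
          have : P ^ (2 * w) = P ^ e * P ^ (1 + 2 * ν) := by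
            rw [← Real.rpow_add hP, ← Real.rpow_natCast]
            congr 1
            rw [hedef]; push_cast; ring
          rw [this]
          have := Real.rpow_pos_of_pos hP e
          field_simp
        have h2 : P ^ (1 + 2 * ν) ≤ (1 + (p : ℝ) ^ 2) ^ (1/2 + ν) := by
          have : P ^ (1 + 2 * ν) = (P ^ 2) ^ (1/2 + ν) := by
            rw [← Real.rpow_natCast, ← Real.rpow_mul hP.le]
            congr 1; push_cast; ring
          rw [this, hPdef, sq_abs]
          apply Real.rpow_le_rpow (by positivity) (by linarith) (by linarith [hν.1])
        calc B * P ^ (2 * w) * (2 * Real.pi * (ρ ^ e / e))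
            = B * (2 * Real.pi) * (P ^ (2 * w) * ρ ^ e) / e := by ring
          _ = B * (2 * Real.pi * ((2 * R₀) ^ e / e)) * P ^ (1 + 2 * ν) := by rw [h1]; ring
          _ ≤ _ := by gcongr

/-- Effective support of mode-dependent deformation terms at scale `1/M`. -/
theorem modeMult_effective_support (r₀ R₀ : ℝ) (hr₀ : 0 < r₀) (hR₀ : 0 < R₀)
    (χ : ℝ → ℝ) (hχm : Measurable χ) (hχ01 : ∀ s, χ s ∈ Set.Icc (0 : ℝ) 1)
    (hχsupp : ∀ s, 2 * R₀ ≤ s → χ s = 0)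
    (m n : ℕ) (hw : m + n = 1 ∨ m + n = 2)
    (ν : ℝ) (hν : ν ∈ Set.Ico (0 : ℝ) (1/2)) (C₁ : ℝ) (hC₁ : 1 ≤ C₁) :
    ∃ C : ℝ, 0 < C ∧
      ∀ M : ℝ, 1 ≤ M →
      ∀ c : ℤ →₀ ℂ,
        (∀ m' : ℕ, sobNorm c ((m' : ℝ) + 1/2) ≤ C₁ * M ^ m' * sobNorm c (1/2)) →
        ∀ (C₀ : ℝ), 0 ≤ C₀ →
        ∀ G : Circ × ℂ → ℂ, Measurable G →
          (∀ᵐ q ∂(μN r₀), ‖G q‖ ≤ C₀ * ‖q.2‖ ^ ((m : ℝ) + n - 3/2)) →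
          ∫⁻ q, ENNReal.ofReal
              (‖modeMult χ c m n q‖ ^ 2 * ‖G q‖ ^ 2 * ‖q.2‖ ^ (-(2 * ν))) ∂(μN r₀)
            ≤ ENNReal.ofReal
                (C * C₀ ^ 2 * M ^ (2 * ν) * sobNorm c (1/2) ^ 2) := by
  obtain ⟨w, hwdef⟩ : ∃ w : ℕ, w = m + n := ⟨_, rfl⟩
  have hw1 : 1 ≤ w := by omega
  have hw' : (1 : ℝ) ≤ w := by exact_mod_cast hw1
  have he : 0 < 2 * (w : ℝ) - 1 - 2 * ν := by linarith [hν.2]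
  set K := 2 * Real.pi * ((2 * R₀) ^ (2 * (w : ℝ) - 1 - 2 * ν) / (2 * (w : ℝ) - 1 - 2 * ν)) with hK
  have hK0 : 0 < K := by positivity
  refine ⟨2 * Real.pi * K * (1 + C₁ ^ 2), by positivity, ?_⟩
  intro M hM c hc C₀ hC₀ G hG hGb
  have hint := aux_interp ν C₁ M hν hM c (by
    have := hc 1
    norm_num at this ⊢
    exact this)
  have hmsD : MeasurableSet (punctDisk r₀) :=
    (measurableSet_lt measurable_const measurable_norm).inter
      (measurableSet_le measurable_norm measurable_const)
  set k : ℝ := 2 * (w : ℝ) - 3 - 2 * ν with hk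
  have hum : Measurable (modeMult χ c m n) := by
    unfold modeMult
    refine Finset.measurable_sum _ fun p _ => ?_
    have h1 : Measurable fun q : Circ × ℂ => χ (((|p| : ℤ) : ℝ) * ‖q.2‖) :=
      hχm.comp (by fun_prop)
    have h2 : Measurable fun q : Circ × ℂ => (fourier p q.1 : ℂ) :=
      (fourier p).continuous.measurable.comp measurable_fst
    exact ((Complex.measurable_ofReal.comp h1).const_mul _).mul h2
  -- `a p z` is the coefficient of `e^{ipt}`
  set a : ℤ → ℂ → ℂ := fun p z => c p * (Complex.I * (p : ℂ)) ^ n * ((|p| : ℤ) : ℂ) ^ m *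
      ((χ (((|p| : ℤ) : ℝ) * ‖z‖) : ℝ) : ℂ) with ha
  have hanorm : ∀ p z, ‖a p z‖ ^ 2 =
      ‖c p‖ ^ 2 * (|(p : ℝ)| ^ w * χ (|(p : ℝ)| * ‖z‖)) ^ 2 := by
    intro p z
    have hx := (hχ01 (|(p : ℝ)| * ‖z‖)).1
    simp only [ha, norm_mul, norm_pow, Complex.norm_I, Complex.norm_intCast, Complex.norm_real,
      Int.cast_abs, abs_abs, one_mul, Real.norm_of_nonneg hx, hwdef, pow_add]
    ring
  have hpos : ∀ᵐ q ∂(μN r₀), 0 < ‖q.2‖ := by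
    unfold μN
    have : ∀ᵐ z ∂((volume : Measure ℂ).restrict (punctDisk r₀)), 0 < ‖z‖ := by
      filter_upwards [ae_restrict_mem hmsD] with z hz
      exact hz.1
    exact Measure.quasiMeasurePreserving_snd.ae this
  calc ∫⁻ q, ENNReal.ofReal
              (‖modeMult χ c m n q‖ ^ 2 * ‖G q‖ ^ 2 * ‖q.2‖ ^ (-(2 * ν))) ∂(μN r₀)
      ≤ ∫⁻ q, ENNReal.ofReal (C₀ ^ 2 * ‖q.2‖ ^ k) *
          ENNReal.ofReal (‖modeMult χ c m n q‖ ^ 2) ∂(μN r₀) := by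
        apply lintegral_mono_ae
        filter_upwards [hGb, hpos] with q h1 h2
        rw [← ENNReal.ofReal_mul (by positivity)]
        apply ENNReal.ofReal_le_ofReal
        have h3 : ‖G q‖ ^ 2 ≤ (C₀ * ‖q.2‖ ^ ((m : ℝ) + n - 3/2)) ^ 2 :=
          pow_le_pow_left₀ (norm_nonneg _) h1 2
        have h4 : ‖q.2‖ ^ k = (‖q.2‖ ^ ((m : ℝ) + n - 3/2)) ^ 2 * ‖q.2‖ ^ (-(2 * ν)) := by
          rw [← Real.rpow_natCast, ← Real.rpow_mul h2.le, ← Real.rpow_add h2]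
          congr 1
          rw [hk, hwdef]; push_cast; ring
        rw [h4]
        calc _ ≤ ‖modeMult χ c m n q‖ ^ 2 * (C₀ * ‖q.2‖ ^ ((m : ℝ) + n - 3/2)) ^ 2
              * ‖q.2‖ ^ (-(2 * ν)) := by gcongr
          _ = _ := by ring
    _ = ∫⁻ z in punctDisk r₀, ∫⁻ t : Circ, ENNReal.ofReal (C₀ ^ 2 * ‖z‖ ^ k) *
          ENNReal.ofReal (‖modeMult χ c m n (t, z)‖ ^ 2) := by
        unfold μN
        exact lintegral_prod_symm' _ (by fun_prop)
    _ = ∫⁻ z in punctDisk r₀, ∑ p ∈ c.support, ENNReal.ofReal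
          ((2 * Real.pi * C₀ ^ 2 * ‖c p‖ ^ 2) *
            ((|(p : ℝ)| ^ w * χ (|(p : ℝ)| * ‖z‖)) ^ 2 * ‖z‖ ^ k)) := by
        apply lintegral_congr
        intro z
        have hpar : ∫⁻ t : Circ, ENNReal.ofReal (‖modeMult χ c m n (t, z)‖ ^ 2) = _ :=
          aux_parseval c.support (fun p => a p z)
        have hm1 : Measurable fun t : Circ => ENNReal.ofReal (‖modeMult χ c m n (t, z)‖ ^ 2) := by
          have : Measurable fun t : Circ => modeMult χ c m n (t, z) :=
            hum.comp (by fun_prop)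
          fun_prop
        rw [lintegral_const_mul _ hm1, hpar, ← ENNReal.ofReal_mul (by positivity),
          ← ENNReal.ofReal_sum_of_nonneg (fun p _ => by positivity), Finset.mul_sum, Finset.mul_sum]
        congr 1
        refine Finset.sum_congr rfl fun p _ => ?_
        rw [hanorm]
        ring
    _ = ∑ p ∈ c.support, ∫⁻ z in punctDisk r₀, ENNReal.ofReal
          ((2 * Real.pi * C₀ ^ 2 * ‖c p‖ ^ 2) *
            ((|(p : ℝ)| ^ w * χ (|(p : ℝ)| * ‖z‖)) ^ 2 * ‖z‖ ^ k)) := by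
        apply lintegral_finsetSum
        intro p _
        have h1 : Measurable fun z : ℂ => χ (|(p : ℝ)| * ‖z‖) := hχm.comp (by fun_prop)
        fun_prop
    _ ≤ ∑ p ∈ c.support, ENNReal.ofReal ((2 * Real.pi * C₀ ^ 2 * ‖c p‖ ^ 2) * K *
          (1 + (p : ℝ) ^ 2) ^ (1/2 + ν)) :=
        Finset.sum_le_sum fun p _ =>
          aux_mode r₀ R₀ hR₀ χ hχ01 hχsupp w hw1 ν hν p _ (by positivity)
    _ = ENNReal.ofReal (2 * Real.pi * K * C₀ ^ 2 * sobNormSq c (1/2 + ν)) := by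
        rw [← ENNReal.ofReal_sum_of_nonneg (fun p _ => by positivity)]
        unfold sobNormSq
        rw [Finset.mul_sum]
        congr 1
        refine Finset.sum_congr rfl fun p _ => ?_
        ring
    _ ≤ _ := by
        apply ENNReal.ofReal_le_ofReal
        calc _ ≤ 2 * Real.pi * K * C₀ ^ 2 *
              ((1 + C₁ ^ 2) * M ^ (2 * ν) * sobNorm c (1/2) ^ 2) := by gcongr
          _ = _ := by ring
end
end

section
/- Scalar implicit-function lemma with two-thirds power bounds (the paper's Lemma used to kill the one-dimensional obstruction, Section 12). Let tau_0, eps_0 > 0 and C_0 >= 0. Let Lambda : (-tau_0, tau_0) -> R be continuously differentiable with Lambda(0) = 0 and Lambda'(0) not equal to 0, and let mu : (0, eps_0) x (-tau_0, tau_0) -> R be continuously differentiable with |mu(eps, tau)| <= C_0 * eps^{2/3} and |(d/dtau) mu(eps, tau)| <= C_0 * eps^{2/3} for all (eps, tau). Then there exist eps_1 in (0, eps_0], delta in (0, tau_0), and a continuously differentiable function tau_star : (0, eps_1) -> (-delta, delta) such that for every eps in (0, eps_1): (i) Lambda(tau_star(eps)) + mu(eps, tau_star(eps)) = 0; (ii)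 tau_star(eps) is the unique tau in (-delta, delta) with Lambda(tau) + mu(eps, tau) = 0; (iii) |tau_star(eps)| <= (2 C_0 / |Lambda'(0)|) * eps^{2/3}; and (iv) if Lambda'(0) > 0 then tau_star(eps) > 0 if and only if mu(eps, tau_star(eps)) < 0, while if Lambda'(0) < 0 then tau_star(eps) > 0 if and only if mu(eps, tau_star(eps)) > 0. -/
open Set

open Filter Topology in
theorem obstruction_aux_pos
    (τ₀ ε₀ C₀ : ℝ) (hτ₀ : 0 < τ₀) (hε₀ : 0 < ε₀)
    (Λ : ℝ → ℝ) (μ : ℝ → ℝ → ℝ)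
    (hΛ : ContDiffOn ℝ 1 Λ (Ioo (-τ₀) τ₀))
    (hΛ0 : Λ 0 = 0) (hΛ' : 0 < deriv Λ 0)
    (hμ : ContDiffOn ℝ 1 (fun p : ℝ × ℝ => μ p.1 p.2) (Ioo 0 ε₀ ×ˢ Ioo (-τ₀) τ₀))
    (hμb : ∀ ε ∈ Ioo (0 : ℝ) ε₀, ∀ τ ∈ Ioo (-τ₀) τ₀,
      |μ ε τ| ≤ C₀ * ε ^ (2/3 : ℝ))
    (hμτb : ∀ ε ∈ Ioo (0 : ℝ) ε₀, ∀ τ ∈ Ioo (-τ₀) τ₀,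
      |deriv (fun t => μ ε t) τ| ≤ C₀ * ε ^ (2/3 : ℝ)) :
    ∃ ε₁ δ : ℝ, ∃ τs : ℝ → ℝ,
      0 < ε₁ ∧ ε₁ ≤ ε₀ ∧ 0 < δ ∧ δ < τ₀ ∧
      ContDiffOn ℝ 1 τs (Ioo 0 ε₁) ∧
      ∀ ε ∈ Ioo (0 : ℝ) ε₁,
        τs ε ∈ Ioo (-δ) δ ∧
        Λ (τs ε) + μ ε (τs ε) = 0 ∧
        (∀ τ ∈ Ioo (-δ) δ, Λ τ + μ ε τ = 0 → τ = τs ε) ∧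
        |τs ε| ≤ 2 * C₀ / deriv Λ 0 * ε ^ (2/3 : ℝ) ∧
        (0 < τs ε ↔ μ ε (τs ε) < 0) := by
  set a := deriv Λ 0 with ha
  have h0 : (0:ℝ) ∈ Ioo (-τ₀) τ₀ := ⟨by linarith, hτ₀⟩
  -- choice of δ
  obtain ⟨δ, hδ, hδτ, hδd⟩ : ∃ δ, 0 < δ ∧ δ < τ₀ ∧ ∀ t ∈ Icc (-δ) δ, a / 2 < deriv Λ t := by
    have hc : ContinuousAt (deriv Λ) 0 :=
      (hΛ.continuousOn_deriv_of_isOpen isOpen_Ioo le_rfl).continuousAt (isOpen_Ioo.mem_nhds h0)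
    have hev : ∀ᶠ t in 𝓝 (0:ℝ), a / 2 < deriv Λ t := hc.eventually_const_lt (by linarith)
    obtain ⟨r, hr, hrt⟩ := Metric.eventually_nhds_iff.1 hev
    refine ⟨min (r/2) (τ₀/2), by positivity, ?_, ?_⟩
    · exact (min_le_right _ _).trans_lt (by linarith)
    · intro t ht
      apply hrt
      rw [Real.dist_eq, sub_zero]
      exact (abs_le.2 ht).trans_lt ((min_le_left _ _).trans_lt (by linarith))
  -- choice of ε₁
  obtain ⟨ε₁, hε₁, hε₁₀, hε₁s⟩ : ∃ ε₁, 0 < ε₁ ∧ ε₁ ≤ ε₀ ∧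
      ∀ ε ∈ Ioo 0 ε₁, C₀ * ε ^ (2/3 : ℝ) < min (a/2) (a/2*δ) := by
    have hc : ContinuousAt (fun ε : ℝ => C₀ * ε ^ (2/3 : ℝ)) 0 :=
      continuousAt_const.mul (Real.continuousAt_rpow_const _ _ (Or.inr (by norm_num)))
    have hev : ∀ᶠ ε in 𝓝 (0:ℝ), C₀ * ε ^ (2/3 : ℝ) < min (a/2) (a/2*δ) := by
      apply hc.eventually_lt_const
      beta_reduce
      rw [Real.zero_rpow (by norm_num), mul_zero]
      positivity
    obtain ⟨r, hr, hrt⟩ := Metric.eventually_nhds_iff.1 hev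
    refine ⟨min r ε₀, by positivity, min_le_right _ _, ?_⟩
    intro ε hε
    apply hrt
    rw [Real.dist_eq, sub_zero, abs_of_pos hε.1]
    exact hε.2.trans_le (min_le_left _ _)
  have hsub : Icc (-δ) δ ⊆ Ioo (-τ₀) τ₀ := fun t ht => ⟨by linarith [ht.1], by linarith [ht.2]⟩
  have hεsub : ∀ ε ∈ Ioo 0 ε₁, ε ∈ Ioo 0 ε₀ := fun ε h => ⟨h.1, h.2.trans_le hε₁₀⟩
  have hΛd : ∀ t ∈ Ioo (-τ₀) τ₀, DifferentiableAt ℝ Λ t := fun t ht =>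
    (hΛ.contDiffAt (isOpen_Ioo.mem_nhds ht)).differentiableAt one_ne_zero
  have hopen : IsOpen (Ioo 0 ε₀ ×ˢ Ioo (-τ₀) τ₀) := isOpen_Ioo.prod isOpen_Ioo
  have hμd : ∀ ε ∈ Ioo 0 ε₀, ∀ t ∈ Ioo (-τ₀) τ₀, DifferentiableAt ℝ (fun t => μ ε t) t := by
    intro ε hε t ht
    have h1 := (hμ.contDiffAt (hopen.mem_nhds (x := (ε, t)) ⟨hε, ht⟩)).differentiableAt one_ne_zero
    exact DifferentiableAt.comp t (f := fun t : ℝ => (ε, t)) h1 (by fun_prop)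
  have hΛm : ∀ x ∈ Icc (-δ) δ, ∀ y ∈ Icc (-δ) δ, x ≤ y → a / 2 * (y - x) ≤ Λ y - Λ x := by
    apply (convex_Icc (-δ) δ).mul_sub_le_image_sub_of_le_deriv
    · exact fun t ht => (hΛd t (hsub ht)).continuousAt.continuousWithinAt
    · exact fun t ht => (hΛd t (hsub (interior_subset ht))).differentiableWithinAt
    · exact fun t ht => (hδd t (interior_subset ht)).le
  have hFd : ∀ ε ∈ Ioo 0 ε₁, ∀ t ∈ Icc (-δ) δ, 0 < deriv (fun t => Λ t + μ ε t) t := by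
    intro ε hε t ht
    rw [deriv_fun_add (hΛd t (hsub ht)) (hμd ε (hεsub ε hε) t (hsub ht))]
    have h1 := (abs_le.1 (hμτb ε (hεsub ε hε) t (hsub ht))).1
    have h2 := (hε₁s ε hε).trans_le (min_le_left _ _)
    linarith [hδd t ht]
  have hFc : ∀ ε ∈ Ioo 0 ε₁, ContinuousOn (fun t => Λ t + μ ε t) (Icc (-δ) δ) :=
    fun ε hε t ht => ((hΛd t (hsub ht)).continuousAt.add
      (hμd ε (hεsub ε hε) t (hsub ht)).continuousAt).continuousWithinAt
  have hFm : ∀ ε ∈ Ioo 0 ε₁, StrictMonoOn (fun t => Λ t + μ ε t) (Icc (-δ) δ) :=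
    fun ε hε => strictMonoOn_of_deriv_pos (convex_Icc _ _) (hFc ε hε)
      fun t ht => hFd ε hε t (interior_subset ht)
  have h0I : (0:ℝ) ∈ Icc (-δ) δ := ⟨by linarith, hδ.le⟩
  have hrI : δ ∈ Icc (-δ) δ := ⟨by linarith, le_rfl⟩
  have hlI : -δ ∈ Icc (-δ) δ := ⟨le_rfl, by linarith⟩
  have hex : ∀ ε ∈ Ioo 0 ε₁, ∃ t ∈ Ioo (-δ) δ, Λ t + μ ε t = 0 := by
    intro ε hε
    have h2 := (hε₁s ε hε).trans_le (min_le_right _ _)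
    have hr := abs_le.1 (hμb ε (hεsub ε hε) δ (hsub hrI))
    have hl := abs_le.1 (hμb ε (hεsub ε hε) (-δ) (hsub hlI))
    have h3 := hΛm 0 h0I δ hrI hδ.le
    have h4 := hΛm (-δ) hlI 0 h0I (by linarith)
    have := intermediate_value_Ioo (by linarith : -δ ≤ δ) (hFc ε hε)
    obtain ⟨t, ht, hte⟩ := this (show (0:ℝ) ∈ Ioo _ _ from
      ⟨by show Λ (-δ) + μ ε (-δ) < 0; nlinarith, by show 0 < Λ δ + μ ε δ; nlinarith⟩)
    exact ⟨t, ht, hte⟩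
  choose! τs hτs hτs0 using hex
  have huniq : ∀ ε ∈ Ioo 0 ε₁, ∀ t ∈ Ioo (-δ) δ, Λ t + μ ε t = 0 → t = τs ε := by
    intro ε hε t ht h
    exact (hFm ε hε).injOn (Ioo_subset_Icc_self ht) (Ioo_subset_Icc_self (hτs ε hε))
      (by show Λ t + μ ε t = Λ (τs ε) + μ ε (τs ε); rw [h, hτs0 ε hε])
  refine ⟨ε₁, δ, τs, hε₁, hε₁₀, hδ, hδτ, ?_, ?_⟩
  · intro ε hε
    apply ContDiffAt.contDiffWithinAt
    have htI := Ioo_subset_Icc_self (hτs ε hε)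
    let f : ℝ × ℝ → ℝ := fun p => Λ p.2 + μ p.1 p.2
    have cdf : ContDiffAt ℝ 1 f (ε, τs ε) := by
      have h1 : ContDiffAt ℝ 1 Λ (τs ε) := hΛ.contDiffAt (isOpen_Ioo.mem_nhds (hsub htI))
      exact (ContDiffAt.comp (ε, τs ε) (g := Λ) (f := Prod.snd) h1 contDiffAt_snd).add
        (hμ.contDiffAt (hopen.mem_nhds ⟨hεsub ε hε, hsub htI⟩))
    have hder : (fderiv ℝ f (ε, τs ε) ∘L .inr ℝ ℝ ℝ) 1 = deriv (fun t => Λ t + μ ε t) (τs ε) := by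
      have h1 : HasFDerivAt f (fderiv ℝ f (ε, τs ε)) (ε, τs ε) :=
        (cdf.differentiableAt one_ne_zero).hasFDerivAt
      have h2 := HasFDerivAt.comp (τs ε) (f := fun t : ℝ => (ε, t)) h1 (hasFDerivAt_prodMk_right ε (τs ε))
      exact h2.hasDerivAt.deriv.symm
    have if₂ : (fderiv ℝ f (ε, τs ε) ∘L .inr ℝ ℝ ℝ).IsInvertible := by
      have hne := (hFd ε hε _ htI).ne'
      refine ⟨ContinuousLinearEquiv.unitsEquivAut ℝ (Units.mk0 _ hne), ?_⟩
      ext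
      rw [hder]
      simp
    have hψ := cdf.contDiffAt_implicitFunction one_ne_zero if₂
    have hψ0 := cdf.implicitFunction_apply_self one_ne_zero if₂
    have hev := cdf.eventually_apply_implicitFunction one_ne_zero if₂
    set ψ := cdf.implicitFunction one_ne_zero if₂
    simp only at hψ hψ0 hev
    refine hψ.congr_of_eventuallyEq ?_
    have hin : ∀ᶠ x in 𝓝 ε, ψ x ∈ Ioo (-δ) δ :=
      hψ.continuousAt.eventually (isOpen_Ioo.mem_nhds (by rw [hψ0]; exact hτs ε hε))
    filter_upwards [hev, hin, isOpen_Ioo.mem_nhds hε] with x h1 h2 h3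
    refine (huniq x h3 _ h2 ?_).symm
    exact h1.trans (hτs0 ε hε)
  · intro ε hε
    have ht := hτs ε hε
    have htI := Ioo_subset_Icc_self ht
    have h0' := hτs0 ε hε
    have hb := abs_le.1 (hμb ε (hεsub ε hε) _ (hsub htI))
    refine ⟨ht, h0', huniq ε hε, ?_, ?_⟩
    · rw [div_mul_eq_mul_div, le_div_iff₀ hΛ']
      rcases le_total 0 (τs ε) with h | h
      · have := hΛm 0 h0I _ htI h
        rw [abs_of_nonneg h]; linarith
      · have := hΛm _ htI 0 h0I h
        rw [abs_of_nonpos h]; linarith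
    · constructor
      · intro h
        have := hΛm 0 h0I _ htI h.le
        nlinarith
      · intro h
        by_contra! hn
        have := hΛm _ htI 0 h0I hn
        nlinarith

/-- Scalar implicit-function lemma with two-thirds power bounds,
used to kill the one-dimensional obstruction. -/
theorem one_dimensional_obstruction_implicit_function
    (τ₀ ε₀ C₀ : ℝ) (hτ₀ : 0 < τ₀) (hε₀ : 0 < ε₀) (hC₀ : 0 ≤ C₀)
    (Λ : ℝ → ℝ) (μ : ℝ → ℝ → ℝ)
    (hΛ : ContDiffOn ℝ 1 Λ (Ioo (-τ₀) τ₀))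
    (hΛ0 : Λ 0 = 0) (hΛ' : deriv Λ 0 ≠ 0)
    (hμ : ContDiffOn ℝ 1 (fun p : ℝ × ℝ => μ p.1 p.2) (Ioo 0 ε₀ ×ˢ Ioo (-τ₀) τ₀))
    (hμb : ∀ ε ∈ Ioo (0 : ℝ) ε₀, ∀ τ ∈ Ioo (-τ₀) τ₀,
      |μ ε τ| ≤ C₀ * ε ^ (2/3 : ℝ))
    (hμτb : ∀ ε ∈ Ioo (0 : ℝ) ε₀, ∀ τ ∈ Ioo (-τ₀) τ₀,
      |deriv (fun t => μ ε t) τ| ≤ C₀ * ε ^ (2/3 : ℝ)) :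
    ∃ ε₁ δ : ℝ, ∃ τs : ℝ → ℝ,
      0 < ε₁ ∧ ε₁ ≤ ε₀ ∧ 0 < δ ∧ δ < τ₀ ∧
      ContDiffOn ℝ 1 τs (Ioo 0 ε₁) ∧
      ∀ ε ∈ Ioo (0 : ℝ) ε₁,
        τs ε ∈ Ioo (-δ) δ ∧
        Λ (τs ε) + μ ε (τs ε) = 0 ∧
        (∀ τ ∈ Ioo (-δ) δ, Λ τ + μ ε τ = 0 → τ = τs ε) ∧
        |τs ε| ≤ 2 * C₀ / |deriv Λ 0| * ε ^ (2/3 : ℝ) ∧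
        (0 < deriv Λ 0 → (0 < τs ε ↔ μ ε (τs ε) < 0)) ∧
        (deriv Λ 0 < 0 → (0 < τs ε ↔ 0 < μ ε (τs ε))) := by
  rcases lt_or_gt_of_ne hΛ' with h | h
  · have hd : deriv (fun t => -Λ t) 0 = -deriv Λ 0 := deriv.fun_neg
    obtain ⟨ε₁, δ, τs, h1, h2, h3, h4, h5, h6⟩ := obstruction_aux_pos τ₀ ε₀ C₀ hτ₀ hε₀
      (fun t => -Λ t) (fun e t => -μ e t) hΛ.neg (by simp [hΛ0]) (by rw [hd]; linarith) hμ.neg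
      (by simpa only [abs_neg] using hμb)
      (by
        intro ε hε τ hτ
        rw [deriv.fun_neg, abs_neg]
        exact hμτb ε hε τ hτ)
    refine ⟨ε₁, δ, τs, h1, h2, h3, h4, h5, fun ε hε => ?_⟩
    obtain ⟨g1, g2, g3, g4, g5⟩ := h6 ε hε
    refine ⟨g1, by linarith, fun τ hτ h0 => g3 τ hτ (by linarith), ?_, fun h' => by linarith, ?_⟩
    · rwa [abs_of_neg h, ← hd]
    · intro _
      rw [g5, neg_lt_zero]
  · obtain ⟨ε₁, δ, τs, h1, h2, h3, h4, h5, h6⟩ := obstruction_aux_pos τ₀ ε₀ C₀ hτ₀ hε₀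
      Λ μ hΛ hΛ0 h hμ hμb hμτb
    refine ⟨ε₁, δ, τs, h1, h2, h3, h4, h5, fun ε hε => ?_⟩
    obtain ⟨g1, g2, g3, g4, g5⟩ := h6 ε hε
    refine ⟨g1, g2, g3, ?_, fun _ => g5, fun h' => by linarith⟩
    rwa [abs_of_pos h]
end
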